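/- arXiv:1702.02866 — 2 statements merged into one kernel-verified Lean document; each statement's English description precedes it below -/
import Mathlib

section
/- Fix t > 0 and set Λ^{(t)}_j = e^{-t·2^j} for j ∈ ℤ. Let K_t be the kernel in 𝒦 associated to the decreasing sequence (Λ^{(t)}_j), equivalently K_t(x,y) = Σ_{h∈ℋ} e^{-t·2^{j(h)}} h(x) h(y) for x ≠ y. Then K_t(x,y) = (1/t)·ψ(δ(x,y)/t) for all x ≠ y, where ψ(r) = (1/r)(Σ_{j≥1} 2^{-j} e^{-1/(2^j r)} − e^{-1/r}), and consequently δ(x,y)² K_t(x,y) → (2/3)·t as δ(x,y) → +∞. -/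
open MeasureTheory Set Filter
open scoped ENNReal

/-- The dyadic distance on ℝ⁺: the infimum of the lengths of the dyadic
intervals `[k·2^{-j}, (k+1)·2^{-j})` containing both points (and `0` on the diagonal). -/
noncomputable def dyadicDist (x y : ℝ) : ℝ :=
  if x = y then 0
  else sInf {r : ℝ | ∃ (j : ℤ) (k : ℕ), r = (2:ℝ) ^ (-j) ∧
    x ∈ Set.Ico ((k : ℝ) * (2:ℝ) ^ (-j)) (((k : ℝ) + 1) * (2:ℝ) ^ (-j)) ∧
    y ∈ Set.Ico ((k : ℝ) * (2:ℝ) ^ (-j)) (((k : ℝ) + 1) * (2:ℝ) ^ (-j))}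

/-- The sequence `α_l = 2^{-l}(k_{-l} - k_{-l+1})` associated to the level values `k` of a
kernel in `𝒦`. -/
noncomputable def alphaOf (k : ℤ → ℝ) (l : ℤ) : ℝ :=
  (2:ℝ) ^ (-l) * (k (-l) - k (-l + 1))

/-- The profile `φ(s) = Σ_{l∈ℤ} α_l 2^l χ_{(0,2^{-l}]}(s)` associated to the level values `k`. -/
noncomputable def phiOf (k : ℤ → ℝ) (s : ℝ) : ℝ :=
  ∑' l : ℤ, alphaOf k l * ((2:ℝ) ^ l * (if s ∈ Set.Ioc (0:ℝ) ((2:ℝ) ^ (-l)) then 1 else 0))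

/-- The sequence `Λ_j = Σ_{l>j} α_l` associated to the level values `k`. -/
noncomputable def LambdaOf (k : ℤ → ℝ) (j : ℤ) : ℝ :=
  ∑' m : ℕ, alphaOf k (j + 1 + m)

/-- The Haar function `h^j_k(x) = 2^{j/2}(χ_{[0,1/2)} - χ_{[1/2,1)})(2^j x - k)`,
supported in the dyadic interval `I^j_k = [k·2^{-j},(k+1)·2^{-j})`. -/
noncomputable def haarFn (j : ℤ) (k : ℕ) (x : ℝ) : ℝ :=
  (2:ℝ) ^ ((j : ℝ) / 2) *
    (if (2:ℝ) ^ j * x - (k : ℝ) ∈ Set.Ico (0:ℝ) (1/2) then 1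
     else if (2:ℝ) ^ j * x - (k : ℝ) ∈ Set.Ico (1/2 : ℝ) 1 then -1 else 0)

/-- The kernel associated to a sequence `Λ`:
`K(x,y) = Σ_{j∈ℤ} (Λ_{j-1} - Λ_j)·2^j·χ_{(0,2^{-j}]}(δ(x,y))`. -/
noncomputable def kernelOfLambda (Λ : ℤ → ℝ) (x y : ℝ) : ℝ :=
  ∑' j : ℤ, (Λ (j - 1) - Λ j) *
    ((2:ℝ) ^ j * (if dyadicDist x y ∈ Set.Ioc (0:ℝ) ((2:ℝ) ^ (-j)) then 1 else 0))

/-- The profile `ψ(r) = (1/r)·(Σ_{j≥1} 2^{-j} e^{-1/(2^j r)} - e^{-1/r})`. -/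
noncomputable def psiFn (r : ℝ) : ℝ :=
  (1 / r) * ((∑' j : ℕ, (2:ℝ) ^ (-(j : ℤ) - 1) * Real.exp (-((2:ℝ) ^ ((j : ℤ) + 1) * r)⁻¹)) -
    Real.exp (-r⁻¹))

/-! Let `n` be the level of the smallest dyadic interval containing `x ≠ y`, so `δ(x,y) = 2^{-n}`.
In the Haar series only the wavelets containing both points survive, one at each level `j ≤ n`:
their product is `2^j` if `j < n`, where both points lie in the same half of the interval, and
`-2^n` if `j = n`, where the points are separated. Summation by parts brings the kernel of a
bounded `Λ` to the same form `Σ_{j<n} Λ_j 2^j - Λ_n 2^n`, and for `Λ_j = e^{-t 2^j}` this is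
`ψ(2^{-n}/t)/t`. Finally, with `a_j = 2^{-j}`, `r² ψ(r) = Σ_{j≥1} a_j · r (e^{-a_j/r} - e^{-1/r})`
tends to `Σ_{j≥1} a_j (1 - a_j) = 1 - 1/3` as `r → ∞`, by dominated convergence. -/

/-- The index `k` of the dyadic interval `I^j_k` of level `j` that contains the point
`x ≥ 0`; since `⌊·⌋₊` truncates, it is `0` for `x < 0`. -/
noncomputable def dyadicIndex (j : ℤ) (x : ℝ) : ℕ :=
  ⌊(2 : ℝ) ^ j * x⌋₊

/-- `n` is the level of the smallest dyadic interval containing both `x` and `y`: the two points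
share their dyadic interval at exactly the levels `j ≤ n`. -/
def IsFinestCommonLevel (x y : ℝ) (n : ℤ) : Prop :=
  ∀ j : ℤ, dyadicIndex j x = dyadicIndex j y ↔ j ≤ n

lemma mem_Ico_zpow_iff_dyadicIndex_eq {x : ℝ} (hx : 0 ≤ x) (j : ℤ) (k : ℕ) :
    x ∈ Ico ((k : ℝ) * (2 : ℝ) ^ (-j)) (((k : ℝ) + 1) * (2 : ℝ) ^ (-j)) ↔
      dyadicIndex j x = k := by
  have hpos : (0 : ℝ) < 2 ^ j := by positivity
  rw [dyadicIndex, Nat.floor_eq_iff (by positivity), mem_Ico, zpow_neg, ← div_eq_mul_inv,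
    ← div_eq_mul_inv, div_le_iff₀ hpos, lt_div_iff₀ hpos, mul_comm x]

lemma dyadicIndex_sub_natCast (j : ℤ) (m : ℕ) (x : ℝ) :
    dyadicIndex (j - m) x = dyadicIndex j x / 2 ^ m := by
  rw [dyadicIndex, dyadicIndex, ← Nat.floor_div_natCast, zpow_sub₀ two_ne_zero, zpow_natCast]
  push_cast
  rw [div_mul_eq_mul_div]

lemma dyadicIndex_add_one_div_two (j : ℤ) (x : ℝ) :
    dyadicIndex (j + 1) x / 2 = dyadicIndex j x := by
  simpa using (dyadicIndex_sub_natCast (j + 1) 1 x).symm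

lemma isLowerSet_dyadicIndex_eq (x y : ℝ) :
    IsLowerSet {j : ℤ | dyadicIndex j x = dyadicIndex j y} := by
  intro j i hij (hj : dyadicIndex j x = dyadicIndex j y)
  obtain ⟨m, rfl⟩ := Int.le.dest hij
  have hi := dyadicIndex_sub_natCast (i + m) m
  simp only [add_sub_cancel_right] at hi
  simp only [mem_ofPred_eq, hi, hj]

lemma eventually_dyadicIndex_eq_zero (x : ℝ) : ∀ᶠ j in atBot, dyadicIndex j x = 0 := by
  obtain ⟨N, hN⟩ := pow_unbounded_of_one_lt |x| (one_lt_two : (1 : ℝ) < 2)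
  filter_upwards [eventually_le_atBot (-(N : ℤ))] with j hj
  rw [dyadicIndex, Nat.floor_eq_zero]
  calc (2 : ℝ) ^ j * x ≤ 2 ^ j * |x| := by
        gcongr
        exact le_abs_self x
    _ ≤ 2 ^ (-(N : ℤ)) * |x| := by
        gcongr
        exact one_le_two
    _ < 1 := by rwa [zpow_neg, zpow_natCast, inv_mul_lt_iff₀ (by positivity), mul_one]

lemma two_zpow_mul_abs_sub_lt_one {x y : ℝ} (hx : 0 ≤ x) (hy : 0 ≤ y) {j : ℤ}
    (h : dyadicIndex j x = dyadicIndex j y) : (2 : ℝ) ^ j * |x - y| < 1 := by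
  have hpos : (0 : ℝ) < 2 ^ j := by positivity
  obtain ⟨hx₁, hx₂⟩ := (Nat.floor_eq_iff (by positivity)).1 h
  obtain ⟨hy₁, hy₂⟩ := (Nat.floor_eq_iff (by positivity)).1 (rfl : dyadicIndex j y = _)
  calc (2 : ℝ) ^ j * |x - y| = |2 ^ j * x - 2 ^ j * y| := by
        rw [← mul_sub, abs_mul, abs_of_pos hpos]
    _ < 1 := abs_sub_lt_iff.2 ⟨by linarith, by linarith⟩

lemma bddAbove_dyadicIndex_eq {x y : ℝ} (hx : 0 ≤ x) (hy : 0 ≤ y) (hxy : x ≠ y) :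
    BddAbove {j : ℤ | dyadicIndex j x = dyadicIndex j y} := by
  have hpos : 0 < |x - y| := abs_pos.2 (sub_ne_zero.2 hxy)
  obtain ⟨M, hM⟩ := pow_unbounded_of_one_lt |x - y|⁻¹ (one_lt_two : (1 : ℝ) < 2)
  refine ⟨M, fun j hj => ?_⟩
  have hlt : (2 : ℝ) ^ j < 2 ^ (M : ℤ) := by
    calc (2 : ℝ) ^ j < |x - y|⁻¹ := by
          rw [← one_div, lt_div_iff₀ hpos]
          exact two_zpow_mul_abs_sub_lt_one hx hy hj
      _ < 2 ^ (M : ℤ) := by rwa [zpow_natCast]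
  exact ((zpow_lt_zpow_iff_right₀ one_lt_two).1 hlt).le

lemma exists_isFinestCommonLevel {x y : ℝ} (hx : 0 ≤ x) (hy : 0 ≤ y) (hxy : x ≠ y) :
    ∃ n, IsFinestCommonLevel x y n := by
  obtain ⟨b, hb⟩ := bddAbove_dyadicIndex_eq hx hy hxy
  obtain ⟨i, hix, hiy⟩ :=
    ((eventually_dyadicIndex_eq_zero x).and (eventually_dyadicIndex_eq_zero y)).exists
  obtain ⟨n, hn, hmax⟩ := Int.exists_greatest_of_bdd ⟨b, fun _ hj => hb hj⟩ ⟨i, hix.trans hiy.symm⟩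
  exact ⟨n, fun j => ⟨hmax j, fun hj => isLowerSet_dyadicIndex_eq x y hj hn⟩⟩

lemma IsFinestCommonLevel.dyadicDist_eq {x y : ℝ} {n : ℤ} (h : IsFinestCommonLevel x y n)
    (hx : 0 ≤ x) (hy : 0 ≤ y) : dyadicDist x y = (2 : ℝ) ^ (-n) := by
  have hxy : x ≠ y := by
    rintro rfl
    simpa using (h (n + 1)).1 rfl
  rw [dyadicDist, if_neg hxy]
  simp only [mem_Ico_zpow_iff_dyadicIndex_eq hx, mem_Ico_zpow_iff_dyadicIndex_eq hy]
  refine IsLeast.csInf_eq ⟨⟨n, dyadicIndex n x, rfl, rfl, ((h n).2 le_rfl).symm⟩, ?_⟩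
  rintro r ⟨j, k, rfl, hjx, hjy⟩
  have hjn : j ≤ n := (h j).1 (hjx.trans hjy.symm)
  exact zpow_le_zpow_right₀ one_le_two (neg_le_neg hjn)

lemma hasSum_nat_sub_iff {M : Type*} [AddCommMonoid M] [TopologicalSpace M] {f : ℤ → M} {n : ℤ}
    (hf : ∀ j, n < j → f j = 0) {a : M} :
    HasSum (fun i : ℕ => f (n - i)) a ↔ HasSum f a := by
  have hinj : Function.Injective fun i : ℕ => n - (i : ℤ) := fun i j hij => by
    simpa using hij
  refine hinj.hasSum_iff (f := f) fun j hj => hf j ?_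
  by_contra! hle
  exact hj ⟨(n - j).toNat, by simp [hle]⟩

lemma hasSum_nat_sub_of_pred {M : Type*} [AddCommMonoid M] [TopologicalSpace M] [ContinuousAdd M]
    {f : ℤ → M} {n : ℤ} {a : M} (h : HasSum (fun i : ℕ => f (n - 1 - i)) a) :
    HasSum (fun i : ℕ => f (n - i)) (f n + a) := by
  have hsucc : HasSum (fun i : ℕ => f (n - ↑(i + 1))) a := by
    simpa only [Nat.cast_add_one, sub_add_eq_sub_sub_swap] using h
  simpa using hsucc.zero_add (f := fun i : ℕ => f (n - i))

section KernelSeries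

variable {Λ : ℤ → ℝ} {x y T : ℝ} {n : ℤ}

lemma summable_mul_two_zpow_of_bounded {C : ℝ} (hΛ : ∀ j, |Λ j| ≤ C) (m : ℤ) :
    Summable fun i : ℕ => Λ (m - i) * (2 : ℝ) ^ (m - i) := by
  refine Summable.of_norm_bounded (summable_geometric_two.mul_left (C * 2 ^ m)) fun i => ?_
  have hpow : (2 : ℝ) ^ (m - i) = 2 ^ m * (1 / 2) ^ i := by
    rw [zpow_sub₀ two_ne_zero, zpow_natCast, one_div_pow, mul_one_div]
  rw [Real.norm_eq_abs, abs_mul, hpow, abs_of_pos (a := (2 : ℝ) ^ m * _) (by positivity), mul_assoc]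
  gcongr
  exact hΛ _

lemma hasSum_sub_mul_two_zpow
    (hT : HasSum (fun i : ℕ => Λ (n - 1 - i) * (2 : ℝ) ^ (n - 1 - i)) T) :
    HasSum (fun i : ℕ => (Λ (n - i - 1) - Λ (n - i)) * (2 : ℝ) ^ (n - i))
      (T - Λ n * (2 : ℝ) ^ n) := by
  have hshift := hasSum_nat_sub_of_pred (f := fun j => Λ j * (2 : ℝ) ^ j) hT
  have hdouble (i : ℕ) : (2 : ℝ) ^ (n - i) = 2 * 2 ^ (n - 1 - i) := by
    rw [sub_right_comm, zpow_sub_one₀ two_ne_zero]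
    ring
  convert! (hT.mul_left 2).sub hshift using 1
  · ext i
    rw [sub_right_comm, sub_mul, hdouble]
    ring
  · ring

lemma kernelOfLambda_eq_sub (hδ : dyadicDist x y = (2 : ℝ) ^ (-n))
    (hT : HasSum (fun i : ℕ => Λ (n - 1 - i) * (2 : ℝ) ^ (n - 1 - i)) T) :
    kernelOfLambda Λ x y = T - Λ n * (2 : ℝ) ^ n := by
  have hmem (j : ℤ) : dyadicDist x y ∈ Ioc (0 : ℝ) (2 ^ (-j)) ↔ j ≤ n := by
    rw [hδ, mem_Ioc, zpow_le_zpow_iff_right₀ one_lt_two, neg_le_neg_iff]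
    exact and_iff_right (by positivity)
  simp only [kernelOfLambda, hmem]
  refine ((hasSum_nat_sub_iff (n := n) fun j hj => ?_).1 ?_).tsum_eq
  · rw [if_neg hj.not_ge, mul_zero, mul_zero]
  · simpa using hasSum_sub_mul_two_zpow hT

end KernelSeries

lemma haarFn_dyadicIndex {x : ℝ} (hx : 0 ≤ x) (j : ℤ) :
    haarFn j (dyadicIndex j x) x =
      (2 : ℝ) ^ ((j : ℝ) / 2) * (-1) ^ dyadicIndex (j + 1) x := by
  have hhalf := dyadicIndex_add_one_div_two j x
  have hfloor := (Nat.floor_eq_iff (by positivity)).1 (rfl : dyadicIndex (j + 1) x = _)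
  rw [zpow_add_one₀ two_ne_zero] at hfloor
  rw [haarFn]
  congr 1
  rcases Nat.even_or_odd' (dyadicIndex (j + 1) x) with ⟨k, hk | hk⟩
  · obtain rfl : k = dyadicIndex j x := by omega
    rw [hk] at hfloor ⊢
    push_cast at hfloor
    rw [if_pos ⟨by linarith, by linarith⟩, (even_two_mul _).neg_one_pow]
  · obtain rfl : k = dyadicIndex j x := by omega
    rw [hk] at hfloor ⊢
    push_cast at hfloor
    rw [if_neg (fun h => by linarith [h.2]), if_pos ⟨by linarith, by linarith⟩,
      (odd_two_mul_add_one _).neg_one_pow]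

lemma haarFn_eq_zero_of_ne_dyadicIndex {x : ℝ} (hx : 0 ≤ x) {j : ℤ} {k : ℕ}
    (hk : k ≠ dyadicIndex j x) : haarFn j k x = 0 := by
  have hout : ¬((k : ℝ) ≤ 2 ^ j * x ∧ 2 ^ j * x < k + 1) := fun h =>
    hk ((Nat.floor_eq_iff (by positivity)).2 h).symm
  rw [haarFn, if_neg, if_neg, mul_zero]
  all_goals
    rintro ⟨hl, hr⟩
    exact hout ⟨by linarith, by linarith⟩

lemma haarFn_mul_haarFn {x y : ℝ} (hx : 0 ≤ x) (hy : 0 ≤ y) {j : ℤ}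
    (h : dyadicIndex j x = dyadicIndex j y) :
    haarFn j (dyadicIndex j x) x * haarFn j (dyadicIndex j x) y =
      2 ^ j * (-1) ^ (dyadicIndex (j + 1) x + dyadicIndex (j + 1) y) := by
  have hsq : (2 : ℝ) ^ ((j : ℝ) / 2) * (2 : ℝ) ^ ((j : ℝ) / 2) = 2 ^ j := by
    rw [← Real.rpow_add two_pos, add_halves, Real.rpow_intCast]
  rw [haarFn_dyadicIndex hx, h, haarFn_dyadicIndex hy, mul_mul_mul_comm, hsq, pow_add]

namespace IsFinestCommonLevel

variable {x y : ℝ} {n : ℤ}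

lemma haarFn_mul_haarFn_of_lt (h : IsFinestCommonLevel x y n) (hx : 0 ≤ x) (hy : 0 ≤ y) {j : ℤ}
    (hj : j < n) : haarFn j (dyadicIndex j x) x * haarFn j (dyadicIndex j x) y = 2 ^ j := by
  rw [haarFn_mul_haarFn hx hy ((h j).2 hj.le), (h (j + 1)).2 hj, (Even.add_self _).neg_one_pow,
    mul_one]

lemma haarFn_mul_haarFn_self (h : IsFinestCommonLevel x y n) (hx : 0 ≤ x) (hy : 0 ≤ y) :
    haarFn n (dyadicIndex n x) x * haarFn n (dyadicIndex n x) y = -2 ^ n := by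
  have hodd : Odd (dyadicIndex (n + 1) x + dyadicIndex (n + 1) y) := by
    have hne : dyadicIndex (n + 1) x ≠ dyadicIndex (n + 1) y := by
      simp [h (n + 1)]
    have hdiv := (h n).2 le_rfl
    rw [← dyadicIndex_add_one_div_two n x, ← dyadicIndex_add_one_div_two n y] at hdiv
    rw [Nat.odd_iff]
    omega
  rw [haarFn_mul_haarFn hx hy ((h n).2 le_rfl), hodd.neg_one_pow, mul_neg_one]

lemma haarFn_mul_haarFn_of_gt (h : IsFinestCommonLevel x y n) (hy : 0 ≤ y) {j : ℤ}
    (hj : n < j) : haarFn j (dyadicIndex j x) x * haarFn j (dyadicIndex j x) y = 0 := by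
  rw [haarFn_eq_zero_of_ne_dyadicIndex hy (fun hxy => hj.not_ge ((h j).1 hxy)), mul_zero]

lemma hasSum_haarFn (h : IsFinestCommonLevel x y n) (hx : 0 ≤ x) (hy : 0 ≤ y) {Λ : ℤ → ℝ} {T : ℝ}
    (hT : HasSum (fun i : ℕ => Λ (n - 1 - i) * (2 : ℝ) ^ (n - 1 - i)) T) :
    HasSum (fun p : ℤ × ℕ => Λ p.1 * haarFn p.1 p.2 x * haarFn p.1 p.2 y)
      (T - Λ n * (2 : ℝ) ^ n) := by
  have hinj : Function.Injective fun j : ℤ => (j, dyadicIndex j x) := fun i j hij =>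
    congrArg Prod.fst hij
  simp only [mul_assoc]
  rw [← hinj.hasSum_iff fun p hp => ?_, ← hasSum_nat_sub_iff (n := n) fun j hj => ?_]
  · have hbelow (i : ℕ) : n - 1 - (i : ℤ) < n := by omega
    have hsum := hasSum_nat_sub_of_pred (n := n) (a := T) (f := fun j : ℤ =>
      Λ j * (haarFn j (dyadicIndex j x) x * haarFn j (dyadicIndex j x) y))
      (by simpa only [h.haarFn_mul_haarFn_of_lt hx hy (hbelow _)] using hT)
    rw [h.haarFn_mul_haarFn_self hx hy] at hsum
    convert! hsum using 1
    ring
  · rw [Function.comp_apply, h.haarFn_mul_haarFn_of_gt hy hj, mul_zero]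
  · have hne : p.2 ≠ dyadicIndex p.1 x := fun hp' => hp ⟨p.1, Prod.ext rfl hp'.symm⟩
    rw [haarFn_eq_zero_of_ne_dyadicIndex hx hne, zero_mul, mul_zero]

end IsFinestCommonLevel

lemma kernelOfLambda_eq_tsum_haarFn {Λ : ℤ → ℝ} {C : ℝ} (hΛ : ∀ j, |Λ j| ≤ C) {x y : ℝ}
    (hx : 0 ≤ x) (hy : 0 ≤ y) (hxy : x ≠ y) :
    kernelOfLambda Λ x y = ∑' p : ℤ × ℕ, Λ p.1 * haarFn p.1 p.2 x * haarFn p.1 p.2 y := by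
  obtain ⟨n, hn⟩ := exists_isFinestCommonLevel hx hy hxy
  have hT := (summable_mul_two_zpow_of_bounded hΛ (n - 1)).hasSum
  rw [kernelOfLambda_eq_sub (hn.dyadicDist_eq hx hy) hT, (hn.hasSum_haarFn hx hy hT).tsum_eq]

lemma abs_exp_neg_mul_two_zpow_le_one {t : ℝ} (ht : 0 ≤ t) (j : ℤ) :
    |Real.exp (-t * (2 : ℝ) ^ j)| ≤ 1 := by
  rw [Real.abs_exp, Real.exp_le_one_iff, neg_mul, neg_nonpos]
  positivity

lemma psiFn_eq_tsum_one_half_pow (r : ℝ) :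
    psiFn r = (1 / r) * ((∑' j : ℕ, (1 / 2 : ℝ) ^ (j + 1) * Real.exp (-((1 / 2) ^ (j + 1) / r))) -
      Real.exp (-(1 / r))) := by
  have hpow (j : ℕ) : (2 : ℝ) ^ (-(j : ℤ) - 1) = (1 / 2) ^ (j + 1) := by
    rw [← neg_add', zpow_neg, one_div, inv_pow]
    norm_cast
  have hinv (j : ℕ) : ((2 : ℝ) ^ ((j : ℤ) + 1) * r)⁻¹ = (1 / 2) ^ (j + 1) / r := by
    rw [mul_inv, ← zpow_neg, neg_add', hpow, ← div_eq_mul_inv]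
  simp only [psiFn, hpow, hinv, one_div r]

lemma one_div_mul_psiFn_two_zpow_div {t : ℝ} (ht : t ≠ 0) (n : ℤ) :
    (1 / t) * psiFn ((2 : ℝ) ^ (-n) / t) =
      (∑' i : ℕ, Real.exp (-t * (2 : ℝ) ^ (n - 1 - i)) * (2 : ℝ) ^ (n - 1 - i)) -
        Real.exp (-t * (2 : ℝ) ^ n) * (2 : ℝ) ^ n := by
  have hpow (i : ℕ) : (2 : ℝ) ^ (n - 1 - i) = 2 ^ n * (1 / 2) ^ (i + 1) := by
    rw [sub_sub, add_comm 1, zpow_sub₀ two_ne_zero, one_div_pow, mul_one_div]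
    norm_cast
  have hdiv (a : ℝ) : a / ((2 : ℝ) ^ (-n) / t) = t * (2 ^ n * a) := by
    rw [zpow_neg]
    field_simp
  have hscale : 1 / t * (1 / ((2 : ℝ) ^ (-n) / t)) = 2 ^ n := by
    rw [hdiv]
    field_simp
  rw [psiFn_eq_tsum_one_half_pow, ← mul_assoc, hscale, mul_sub, ← tsum_mul_left]
  simp only [hdiv, hpow, neg_mul, mul_one]
  congr 1
  · exact tsum_congr fun i => by ring
  · ring

lemma kernelOfLambda_exp_eq_psiFn {t : ℝ} (ht : 0 < t) {x y : ℝ} (hx : 0 ≤ x) (hy : 0 ≤ y)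
    (hxy : x ≠ y) :
    kernelOfLambda (fun j : ℤ => Real.exp (-t * (2 : ℝ) ^ j)) x y =
      (1 / t) * psiFn (dyadicDist x y / t) := by
  obtain ⟨n, hn⟩ := exists_isFinestCommonLevel hx hy hxy
  have hδ := hn.dyadicDist_eq hx hy
  let Λ : ℤ → ℝ := fun j => Real.exp (-t * (2 : ℝ) ^ j)
  have hT : Summable fun i : ℕ => Λ (n - 1 - i) * (2 : ℝ) ^ (n - 1 - i) :=
    summable_mul_two_zpow_of_bounded (abs_exp_neg_mul_two_zpow_le_one ht.le) (n - 1)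
  calc kernelOfLambda Λ x y
      = (∑' i : ℕ, Λ (n - 1 - i) * (2 : ℝ) ^ (n - 1 - i)) - Λ n * (2 : ℝ) ^ n :=
        kernelOfLambda_eq_sub hδ hT.hasSum
    _ = (1 / t) * psiFn (dyadicDist x y / t) := by
        rw [hδ, one_div_mul_psiFn_two_zpow_div ht.ne']

lemma tendsto_mul_exp_neg_div_sub_exp_neg_div (a b : ℝ) :
    Tendsto (fun r : ℝ => r * (Real.exp (-(a / r)) - Real.exp (-(b / r)))) atTop
      (nhds (b - a)) := by
  have hexp (c : ℝ) : HasDerivAt (fun s : ℝ => Real.exp (-(c * s))) (-c) 0 := by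
    simpa using ((hasDerivAt_id (0 : ℝ)).const_mul c).neg.exp
  have hslope := ((hexp a).sub (hexp b)).tendsto_slope_zero_right.comp tendsto_inv_atTop_nhdsGT_zero
  rw [neg_sub_neg] at hslope
  refine hslope.congr fun r => ?_
  simp [div_eq_mul_inv]

lemma abs_mul_exp_neg_div_sub_exp_neg_div_le {a b r : ℝ} (ha : 0 ≤ a) (hab : a ≤ b) (hr : 0 < r) :
    |r * (Real.exp (-(a / r)) - Real.exp (-(b / r)))| ≤ b - a := by
  have hmono : Real.exp (-(b / r)) ≤ Real.exp (-(a / r)) := by gcongr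
  have hle_one : Real.exp (-(a / r)) ≤ 1 :=
    Real.exp_le_one_iff.2 (neg_nonpos.2 (by positivity))
  have hfactor : Real.exp (-(b / r)) = Real.exp (-(a / r)) * Real.exp (-((b - a) / r)) := by
    rw [← Real.exp_add]
    ring_nf
  have hc : 0 ≤ (b - a) / r := div_nonneg (sub_nonneg.2 hab) hr.le
  rw [abs_of_nonneg (mul_nonneg hr.le (sub_nonneg.2 hmono)), mul_comm, ← le_div_iff₀ hr, hfactor]
  nlinarith [Real.one_sub_le_exp_neg ((b - a) / r), Real.exp_pos (-(a / r))]

lemma hasSum_one_half_pow_succ : HasSum (fun j : ℕ => (1 / 2 : ℝ) ^ (j + 1)) 1 := by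
  convert hasSum_geometric_two' 1 using 2 with j
  rw [one_div_pow, pow_succ']
  field_simp

lemma hasSum_one_half_pow_succ_mul_one_sub :
    HasSum (fun j : ℕ => (1 / 2 : ℝ) ^ (j + 1) * (1 - (1 / 2) ^ (j + 1))) (2 / 3) := by
  have hquarter : HasSum (fun j : ℕ => (1 / 4 : ℝ) * (1 / 4) ^ j) (1 / 4 * (1 - 1 / 4)⁻¹) :=
    (hasSum_geometric_of_lt_one (by norm_num) (by norm_num)).mul_left _
  convert! hasSum_one_half_pow_succ.sub hquarter using 1
  · ext j
    rw [mul_one_sub, ← mul_pow, ← pow_succ']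
    norm_num
  · norm_num

lemma sq_mul_psiFn {r : ℝ} (hr : 0 < r) :
    r ^ 2 * psiFn r = ∑' j : ℕ, (1 / 2 : ℝ) ^ (j + 1) *
      (r * (Real.exp (-((1 / 2) ^ (j + 1) / r)) - Real.exp (-(1 / r)))) := by
  have hsum : Summable fun j : ℕ => (1 / 2 : ℝ) ^ (j + 1) * Real.exp (-((1 / 2) ^ (j + 1) / r)) :=
    hasSum_one_half_pow_succ.summable.of_nonneg_of_le (fun j => by positivity) fun j =>
      mul_le_of_le_one_right (by positivity) <|
        Real.exp_le_one_iff.2 (neg_nonpos.2 (by positivity))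
  -- The weights `2^{-j}`, `j ≥ 1`, sum to `1`, so `e^{-1/r}` can be moved inside the series.
  have hcenter := hsum.hasSum.sub (hasSum_one_half_pow_succ.mul_right (Real.exp (-(1 / r))))
  rw [psiFn_eq_tsum_one_half_pow, ← mul_assoc, ← one_mul (Real.exp (-(1 / r))),
    ← hcenter.tsum_eq, ← tsum_mul_left]
  refine tsum_congr fun j => ?_
  field_simp

lemma tendsto_sq_mul_psiFn : Tendsto (fun r => r ^ 2 * psiFn r) atTop (nhds (2 / 3)) := by
  have hpow_le_one (j : ℕ) : (1 / 2 : ℝ) ^ (j + 1) ≤ 1 := pow_le_one₀ (by norm_num) (by norm_num)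
  rw [← hasSum_one_half_pow_succ_mul_one_sub.tsum_eq]
  refine (tendsto_tsum_of_dominated_convergence (𝓕 := atTop)
    hasSum_one_half_pow_succ_mul_one_sub.summable
    (fun j => (tendsto_mul_exp_neg_div_sub_exp_neg_div _ 1).const_mul _) ?_).congr' ?_
  · filter_upwards [eventually_gt_atTop 0] with r hr j
    rw [norm_mul, Real.norm_of_nonneg (by positivity : (0 : ℝ) ≤ (1 / 2) ^ (j + 1))]
    gcongr
    exact abs_mul_exp_neg_div_sub_exp_neg_div_le (by positivity) (hpow_le_one j) hr
  · filter_upwards [eventually_gt_atTop 0] with r hr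
    exact (sq_mul_psiFn hr).symm

lemma tendsto_sq_mul_one_div_mul_psiFn_div {t : ℝ} (ht : 0 < t) :
    Tendsto (fun d => d ^ 2 * ((1 / t) * psiFn (d / t))) atTop (nhds (2 / 3 * t)) := by
  have hscaled := (tendsto_sq_mul_psiFn.comp (tendsto_id.atTop_div_const ht)).mul_const t
  refine hscaled.congr fun d => ?_
  simp only [Function.comp_apply, id]
  field_simp

/-- Lemma 8: for `t > 0`, the kernel `K_t ∈ 𝒦` associated to the decreasing sequence
`Λ^{(t)}_j = e^{-t·2^j}` (equivalently, `K_t(x,y) = Σ_{h∈ℋ} e^{-t·2^{j(h)}} h(x)h(y)` for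
`x ≠ y`) satisfies `K_t(x,y) = (1/t)·ψ(δ(x,y)/t)`, and consequently
`δ(x,y)² K_t(x,y) → (2/3)·t` as `δ(x,y) → +∞`. -/
theorem Kt_kernel_stability (t : ℝ) (ht : 0 < t) :
    (∀ x y : ℝ, 0 ≤ x → 0 ≤ y → x ≠ y →
      kernelOfLambda (fun j : ℤ => Real.exp (-t * (2:ℝ) ^ j)) x y =
        ∑' p : ℤ × ℕ, Real.exp (-t * (2:ℝ) ^ p.1) * haarFn p.1 p.2 x * haarFn p.1 p.2 y) ∧
    (∀ x y : ℝ, 0 ≤ x → 0 ≤ y → x ≠ y →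
      kernelOfLambda (fun j : ℤ => Real.exp (-t * (2:ℝ) ^ j)) x y =
        (1 / t) * psiFn (dyadicDist x y / t)) ∧
    (∀ ε : ℝ, 0 < ε → ∃ R : ℝ, ∀ x y : ℝ, 0 ≤ x → 0 ≤ y → R ≤ dyadicDist x y →
      |dyadicDist x y ^ 2 * kernelOfLambda (fun j : ℤ => Real.exp (-t * (2:ℝ) ^ j)) x y -
        2 / 3 * t| < ε) := by
  refine ⟨fun x y hx hy hxy => ?_, fun x y hx hy hxy => ?_, fun ε hε => ?_⟩
  · exact kernelOfLambda_eq_tsum_haarFn (abs_exp_neg_mul_two_zpow_le_one ht.le) hx hy hxy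
  · exact kernelOfLambda_exp_eq_psiFn ht hx hy hxy
  · have hlim := Metric.tendsto_nhds.1 (tendsto_sq_mul_one_div_mul_psiFn_div ht) ε hε
    obtain ⟨R, hR⟩ := eventually_atTop.1 (hlim.and (eventually_gt_atTop 0))
    refine ⟨R, fun x y hx hy hδ => ?_⟩
    obtain ⟨hclose, hpos⟩ := hR _ hδ
    have hxy : x ≠ y := by
      rintro rfl
      simp [dyadicDist] at hpos
    rw [kernelOfLambda_exp_eq_psiFn ht hx hy hxy, ← Real.dist_eq]
    exact hclose
end

section
/- Let K₁, K₂ ∈ 𝒦 with associated sequences (α¹_j, Λ¹_j) and (α²_j, Λ²_j). Then K₃(x,y) = ∫_{ℝ⁺} K₁(x,z) K₂(z,y) dz is well defined, K₃ ∈ 𝒦, and its associated sequences satisfy α³_j = α¹_j Λ²_j + α²_j Λ¹_j + α¹_j α²_j and Λ³_j = Λ¹_j Λ²_j for every j ∈ ℤ. -/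
open MeasureTheory Set Filter
open scoped ENNReal

/-!
A kernel depending only on the dyadic distance is constant on each dyadic sphere, and the sphere of
radius `2 ^ n` has measure `2 ^ (n - 1)`. If `x` and `y` lie in different halves of a dyadic
interval, then in `∫ z, K₁ x z * K₂ z y` the factor `K₂` is constant on the half containing `x`,
`K₁` is constant on the half containing `y`, and both depend only on the sphere about `x` containing
`z` outside the interval. Adding the three contributions gives the level values of the convolution.

For a single kernel, `Λ_j` is the mass of the half of an interval of length `2 ^ (-j)` containing
the base point minus that of the other half, so the formula for `α³` is algebra. As
`Λ_{j-1} = Λ_j + α_j`, it says that `Λ³_j - Λ¹_j Λ²_j` does not depend on `j`, and this difference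
tends to `0` as `j → ∞`. The total mass of the convolution is computed by Fubini's theorem.
-/

theorem floor_div_two_zpow (n : ℤ) (x : ℝ) :
    ⌊x / (2 : ℝ) ^ n⌋ = ⌊x / (2 : ℝ) ^ (n - 1)⌋ / 2 := by
  calc ⌊x / (2 : ℝ) ^ n⌋ = ⌊x / (2 : ℝ) ^ (n - 1) / (2 : ℕ)⌋ := by
        rw [Nat.cast_ofNat, div_div, ← zpow_add_one₀ two_ne_zero, sub_add_cancel]
    _ = ⌊x / (2 : ℝ) ^ (n - 1)⌋ / 2 := Int.floor_div_natCast _ 2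

theorem floor_div_two_zpow_eq_iff {n k : ℤ} {x : ℝ} :
    ⌊x / (2 : ℝ) ^ n⌋ = k ↔ x ∈ Ico (k * (2 : ℝ) ^ n) ((k + 1) * (2 : ℝ) ^ n) := by
  have hpos : (0 : ℝ) < 2 ^ n := by positivity
  rw [Int.floor_eq_iff, le_div_iff₀ hpos, div_lt_iff₀ hpos, mem_Ico]

/-- The dyadic interval of length `2 ^ n` containing `x`. It is the fibre of `y ↦ ⌊y / 2 ^ n⌋`,
so that lying in a common dyadic interval is an equality of integers. Negative points are allowed,
but for `0 ≤ x` it is one of the intervals `[k * 2 ^ n, (k + 1) * 2 ^ n)` with `k : ℕ`. -/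
def dyadicBall (n : ℤ) (x : ℝ) : Set ℝ :=
  {y | ⌊y / (2 : ℝ) ^ n⌋ = ⌊x / (2 : ℝ) ^ n⌋}

/-- The points that share with `x` a dyadic interval of length `2 ^ n`, but none that is shorter;
on `[0, ∞)` this is the sphere of radius `2 ^ n` about `x` for the dyadic distance. -/
def dyadicSphere (n : ℤ) (x : ℝ) : Set ℝ :=
  dyadicBall n x \ dyadicBall (n - 1) x

section Geometry

variable {m n : ℤ} {x y : ℝ}

theorem mem_dyadicBall : y ∈ dyadicBall n x ↔ ⌊y / (2 : ℝ) ^ n⌋ = ⌊x / (2 : ℝ) ^ n⌋ := Iff.rfl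

theorem mem_dyadicBall_comm : y ∈ dyadicBall n x ↔ x ∈ dyadicBall n y := eq_comm

theorem dyadicBall_eq_of_mem (h : y ∈ dyadicBall n x) : dyadicBall n y = dyadicBall n x := by
  ext z
  rw [mem_dyadicBall, mem_dyadicBall, mem_dyadicBall.1 h]

theorem dyadicBall_sub_one_subset (n : ℤ) (x : ℝ) : dyadicBall (n - 1) x ⊆ dyadicBall n x := by
  intro y hy
  rw [mem_dyadicBall, floor_div_two_zpow n y, mem_dyadicBall.1 hy, ← floor_div_two_zpow]

theorem monotone_dyadicBall (x : ℝ) : Monotone (dyadicBall · x) :=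
  monotone_int_of_le_succ fun n ↦ by simpa using dyadicBall_sub_one_subset (n + 1) x

theorem dyadicBall_eq_Ico (n : ℤ) (x : ℝ) :
    dyadicBall n x = Ico (⌊x / (2 : ℝ) ^ n⌋ * (2 : ℝ) ^ n)
      ((⌊x / (2 : ℝ) ^ n⌋ + 1) * (2 : ℝ) ^ n) :=
  ext fun _ ↦ floor_div_two_zpow_eq_iff

theorem measurableSet_dyadicBall (n : ℤ) (x : ℝ) : MeasurableSet (dyadicBall n x) :=
  dyadicBall_eq_Ico n x ▸ measurableSet_Ico

theorem volume_dyadicBall (n : ℤ) (x : ℝ) :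
    volume (dyadicBall n x) = ENNReal.ofReal ((2 : ℝ) ^ n) := by
  rw [dyadicBall_eq_Ico, Real.volume_Ico, ← sub_mul, add_sub_cancel_left, one_mul]

theorem dyadicBall_subset_Ici (n : ℤ) (hx : 0 ≤ x) : dyadicBall n x ⊆ Ici 0 := by
  have hfloor : (0 : ℝ) ≤ ⌊x / (2 : ℝ) ^ n⌋ :=
    Int.cast_nonneg (Int.floor_nonneg.2 (by positivity))
  rw [dyadicBall_eq_Ico]
  exact fun y hy ↦ (mul_nonneg hfloor (by positivity)).trans hy.1

theorem mem_dyadicSphere_comm : y ∈ dyadicSphere n x ↔ x ∈ dyadicSphere n y :=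
  and_congr mem_dyadicBall_comm (not_congr mem_dyadicBall_comm)

theorem dyadicSphere_eq_of_mem_dyadicBall (h : y ∈ dyadicBall m x) (hmn : m < n) :
    dyadicSphere n y = dyadicSphere n x := by
  rw [dyadicSphere, dyadicSphere, dyadicBall_eq_of_mem (monotone_dyadicBall x hmn.le h),
    dyadicBall_eq_of_mem (monotone_dyadicBall x (Int.le_sub_one_of_lt hmn) h)]

theorem ne_of_mem_dyadicSphere (h : y ∈ dyadicSphere n x) : y ≠ x := by
  rintro rfl
  exact h.2 rfl

theorem mem_dyadicBall_iff_of_mem_dyadicSphere (h : y ∈ dyadicSphere n x) :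
    y ∈ dyadicBall m x ↔ n ≤ m := by
  refine ⟨fun hm ↦ ?_, fun hnm ↦ monotone_dyadicBall x hnm h.1⟩
  by_contra! hmn
  exact h.2 (monotone_dyadicBall x (Int.le_sub_one_of_lt hmn) hm)

theorem eq_of_mem_dyadicSphere (hn : y ∈ dyadicSphere n x) (hm : y ∈ dyadicSphere m x) : n = m :=
  le_antisymm ((mem_dyadicBall_iff_of_mem_dyadicSphere hn).1 hm.1)
    ((mem_dyadicBall_iff_of_mem_dyadicSphere hm).1 hn.1)

theorem pairwise_disjoint_dyadicSphere (x : ℝ) :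
    Pairwise (Function.onFun Disjoint (dyadicSphere · x)) :=
  fun _ _ hmn ↦ disjoint_left.2 fun _ hm hn ↦ hmn (eq_of_mem_dyadicSphere hm hn)

theorem measurableSet_dyadicSphere (n : ℤ) (x : ℝ) : MeasurableSet (dyadicSphere n x) :=
  (measurableSet_dyadicBall n x).diff (measurableSet_dyadicBall (n - 1) x)

theorem volume_dyadicSphere (n : ℤ) (x : ℝ) :
    volume (dyadicSphere n x) = ENNReal.ofReal ((2 : ℝ) ^ (n - 1)) := by
  rw [dyadicSphere, measure_sdiff (dyadicBall_sub_one_subset n x)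
    (measurableSet_dyadicBall _ _).nullMeasurableSet (by simp [volume_dyadicBall]),
    volume_dyadicBall, volume_dyadicBall, ← ENNReal.ofReal_sub _ (by positivity),
    zpow_sub_one₀ two_ne_zero]
  ring_nf

theorem measurableSet_setOf_mem_dyadicSphere (n : ℤ) :
    MeasurableSet {p : ℝ × ℝ | p.2 ∈ dyadicSphere n p.1} := by
  have hball (m : ℤ) : MeasurableSet {p : ℝ × ℝ | p.2 ∈ dyadicBall m p.1} :=
    measurableSet_eq_fun (measurable_snd.div_const _).floor (measurable_fst.div_const _).floor
  exact (hball n).diff (hball (n - 1))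

theorem dyadicBall_eq_union (h : y ∈ dyadicSphere n x) :
    dyadicBall n x = dyadicBall (n - 1) x ∪ dyadicBall (n - 1) y := by
  refine subset_antisymm (fun z hz ↦ ?_)
    (union_subset (dyadicBall_sub_one_subset n x)
      (dyadicBall_eq_of_mem h.1 ▸ dyadicBall_sub_one_subset n y))
  obtain ⟨hy, hy'⟩ := h
  simp only [mem_dyadicBall, mem_union, floor_div_two_zpow n] at *
  omega

theorem disjoint_dyadicBall_sub_one (h : y ∈ dyadicSphere n x) :
    Disjoint (dyadicBall (n - 1) x) (dyadicBall (n - 1) y) :=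
  disjoint_left.2 fun _ hx hy ↦
    h.2 (dyadicBall_eq_of_mem hx ▸ mem_dyadicBall_comm.1 hy)

theorem exists_mem_dyadicBall (hx : 0 ≤ x) (hy : 0 ≤ y) : ∃ n, y ∈ dyadicBall n x := by
  obtain ⟨N, hN⟩ := pow_unbounded_of_one_lt (max x y) one_lt_two
  have hfloor {z : ℝ} (hz : 0 ≤ z) (hzN : z < 2 ^ N) : ⌊z / (2 : ℝ) ^ (N : ℤ)⌋ = 0 :=
    floor_div_two_zpow_eq_iff.2 (by simpa using ⟨hz, hzN⟩)
  exact ⟨N, (hfloor hy ((le_max_right x y).trans_lt hN)).trans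
    (hfloor hx ((le_max_left x y).trans_lt hN)).symm⟩

theorem abs_sub_lt_of_mem_dyadicBall (h : y ∈ dyadicBall n x) : |y - x| < (2 : ℝ) ^ n := by
  have hpos : (0 : ℝ) < 2 ^ n := by positivity
  have := Int.abs_sub_lt_one_of_floor_eq_floor h
  rwa [← sub_div, abs_div, abs_of_pos hpos, div_lt_one hpos] at this

theorem exists_mem_dyadicSphere (hx : 0 ≤ x) (hy : 0 ≤ y) (hxy : y ≠ x) :
    ∃ n, y ∈ dyadicSphere n x := by
  obtain ⟨b, hb, -⟩ := exists_mem_Ico_zpow (abs_pos.2 (sub_ne_zero.2 hxy)) one_lt_two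
  obtain ⟨n, hn, hleast⟩ := Int.exists_least_of_bdd (P := fun n ↦ y ∈ dyadicBall n x)
    ⟨b, fun m hm ↦ ((zpow_lt_zpow_iff_right₀ one_lt_two).1
      (hb.trans_lt (abs_sub_lt_of_mem_dyadicBall hm))).le⟩
    (exists_mem_dyadicBall hx hy)
  exact ⟨n, hn, fun h ↦ (hleast _ h).not_gt (sub_one_lt n)⟩

theorem dyadicDist_eq_of_mem_dyadicSphere (hx : 0 ≤ x) (h : y ∈ dyadicSphere n x) :
    dyadicDist x y = (2 : ℝ) ^ n := by
  rw [dyadicDist, if_neg (ne_of_mem_dyadicSphere h).symm]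
  refine IsLeast.csInf_eq ⟨?_, ?_⟩
  · obtain ⟨k, hk⟩ := Int.eq_ofNat_of_zero_le
      (Int.floor_nonneg.2 (by positivity : 0 ≤ x / (2 : ℝ) ^ n))
    have hxk := floor_div_two_zpow_eq_iff.1 hk
    have hyk := floor_div_two_zpow_eq_iff.1 (h.1.trans hk)
    exact ⟨-n, k, by rw [neg_neg], by rwa [neg_neg], by rwa [neg_neg]⟩
  · rintro - ⟨j, k, rfl, hxk, hyk⟩
    have hxy : y ∈ dyadicBall (-j) x :=
      (floor_div_two_zpow_eq_iff (k := k).2 hyk).trans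
        (floor_div_two_zpow_eq_iff (k := k).2 hxk).symm
    exact zpow_le_zpow_right₀ one_le_two ((mem_dyadicBall_iff_of_mem_dyadicSphere h).1 hxy)

theorem dyadicDist_self (x : ℝ) : dyadicDist x x = 0 := if_pos rfl

theorem dyadicDist_eq_zero_iff (hx : 0 ≤ x) (hy : 0 ≤ y) : dyadicDist x y = 0 ↔ x = y := by
  refine ⟨fun h ↦ ?_, fun h ↦ h ▸ dyadicDist_self x⟩
  by_contra! hne
  obtain ⟨n, hn⟩ := exists_mem_dyadicSphere hx hy hne.symm
  exact zpow_ne_zero n two_ne_zero (dyadicDist_eq_of_mem_dyadicSphere hx hn ▸ h)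

theorem dyadicDist_eq_two_zpow_iff (hx : 0 ≤ x) (hy : 0 ≤ y) :
    dyadicDist x y = (2 : ℝ) ^ n ↔ y ∈ dyadicSphere n x := by
  refine ⟨fun hdist ↦ ?_, dyadicDist_eq_of_mem_dyadicSphere hx⟩
  have hne : dyadicDist x y ≠ 0 := hdist ▸ zpow_ne_zero n two_ne_zero
  obtain ⟨m, hm⟩ := exists_mem_dyadicSphere hx hy
    fun h ↦ hne ((dyadicDist_eq_zero_iff hx hy).2 h.symm)
  rw [dyadicDist_eq_of_mem_dyadicSphere hx hm] at hdist
  rwa [← zpow_right_injective₀ two_pos (by norm_num) hdist]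

theorem iUnion_dyadicSphere (hx : 0 ≤ x) : ⋃ n, dyadicSphere n x = Ici 0 \ {x} := by
  ext y
  simp only [mem_iUnion]
  exact ⟨fun ⟨n, hn⟩ ↦ ⟨dyadicBall_subset_Ici n hx hn.1, ne_of_mem_dyadicSphere hn⟩,
    fun hy ↦ exists_mem_dyadicSphere hx hy.1 hy.2⟩

theorem iUnion_dyadicSphere_sub (n : ℤ) (hx : 0 ≤ x) :
    ⋃ m : ℕ, dyadicSphere (n - m) x = dyadicBall n x \ {x} := by
  ext y
  simp only [mem_iUnion]
  refine ⟨fun ⟨m, hm⟩ ↦ ⟨(mem_dyadicBall_iff_of_mem_dyadicSphere hm).2 (by omega),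
    ne_of_mem_dyadicSphere hm⟩, fun ⟨hy, hne⟩ ↦ ?_⟩
  obtain ⟨l, hl⟩ := exists_mem_dyadicSphere hx (dyadicBall_subset_Ici n hx hy) hne
  have hln : l ≤ n := (mem_dyadicBall_iff_of_mem_dyadicSphere hl).1 hy
  exact ⟨(n - l).toNat, by rwa [show n - (n - l).toNat = l by omega]⟩

theorem iUnion_dyadicSphere_add (n : ℤ) (hx : 0 ≤ x) :
    ⋃ m : ℕ, dyadicSphere (n + 1 + m) x = Ici 0 \ dyadicBall n x := by
  ext y
  simp only [mem_iUnion]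
  refine ⟨fun ⟨m, hm⟩ ↦ ⟨dyadicBall_subset_Ici _ hx hm.1, fun hy ↦ ?_⟩, fun ⟨hy, hny⟩ ↦ ?_⟩
  · have := (mem_dyadicBall_iff_of_mem_dyadicSphere hm).1 hy
    omega
  · obtain ⟨l, hl⟩ := exists_mem_dyadicSphere hx hy (by rintro rfl; exact hny rfl)
    rw [mem_dyadicBall_iff_of_mem_dyadicSphere hl] at hny
    exact ⟨(l - n - 1).toNat, by rwa [show n + 1 + (l - n - 1).toNat = l by omega]⟩

end Geometry

/-- The mass that a kernel with level values `k` gives to a dyadic sphere of radius `2 ^ n`, whose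
Lebesgue measure is `2 ^ (n - 1)`. -/
noncomputable def levelMass (k : ℤ → ℝ) (n : ℤ) : ℝ :=
  (2 : ℝ) ^ (n - 1) * k n

/-- The mass that a kernel with level values `k` gives to a dyadic interval of length `2 ^ n`
containing its base point, summed over the dyadic spheres that exhaust this interval. -/
noncomputable def ballMass (k : ℤ → ℝ) (n : ℤ) : ℝ :=
  ∑' m : ℕ, levelMass k (n - m)

section Radial

variable {ι : Type*} {n : ℤ} {x : ℝ} {e : ι → ℤ} {G : ℝ → ℝ} {g : ℤ → ℝ}

theorem integrableOn_dyadicSphere (hG : EqOn G (fun _ ↦ g n) (dyadicSphere n x)) :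
    IntegrableOn G (dyadicSphere n x) :=
  (integrableOn_const (by simp [volume_dyadicSphere])).congr_fun hG.symm
    (measurableSet_dyadicSphere n x)

theorem setIntegral_dyadicSphere (hG : EqOn G (fun _ ↦ g n) (dyadicSphere n x)) :
    ∫ z in dyadicSphere n x, G z = levelMass g n := by
  have hpos : (0 : ℝ) ≤ 2 ^ (n - 1) := by positivity
  rw [setIntegral_congr_fun (measurableSet_dyadicSphere n x) hG, setIntegral_const,
    measureReal_def, volume_dyadicSphere, ENNReal.toReal_ofReal hpos, smul_eq_mul, levelMass]

theorem integrableOn_iUnion_dyadicSphere_iff [Countable ι] (he : Function.Injective e)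
    (hG : ∀ i, EqOn G (fun _ ↦ g (e i)) (dyadicSphere (e i) x)) :
    IntegrableOn G (⋃ i, dyadicSphere (e i) x) ↔ Summable fun i ↦ levelMass g (e i) := by
  refine ⟨fun h ↦ ?_, fun h ↦ ?_⟩
  · simpa only [setIntegral_dyadicSphere (hG _)] using
      (hasSum_integral_iUnion (fun i ↦ measurableSet_dyadicSphere (e i) x)
        ((pairwise_disjoint_dyadicSphere x).comp_of_injective he) h).summable
  · refine integrableOn_iUnion_of_summable_integral_norm
      (fun i ↦ integrableOn_dyadicSphere (hG i)) (h.norm.congr fun i ↦ ?_)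
    rw [setIntegral_dyadicSphere (g := fun n ↦ ‖g n‖) fun z hz ↦ congrArg norm (hG i hz),
      levelMass, levelMass, norm_mul, Real.norm_of_nonneg (by positivity)]

theorem setIntegral_iUnion_dyadicSphere [Countable ι] (he : Function.Injective e)
    (hG : ∀ i, EqOn G (fun _ ↦ g (e i)) (dyadicSphere (e i) x)) :
    ∫ z in ⋃ i, dyadicSphere (e i) x, G z = ∑' i, levelMass g (e i) := by
  by_cases h : IntegrableOn G (⋃ i, dyadicSphere (e i) x)
  · rw [integral_iUnion (fun i ↦ measurableSet_dyadicSphere (e i) x)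
      ((pairwise_disjoint_dyadicSphere x).comp_of_injective he) h]
    exact tsum_congr fun i ↦ setIntegral_dyadicSphere (hG i)
  · rw [integral_undef h, tsum_eq_zero_of_not_summable
      (h ∘ (integrableOn_iUnion_dyadicSphere_iff he hG).2)]

theorem Ici_ae_eq_iUnion_dyadicSphere (hx : 0 ≤ x) :
    Ici 0 =ᵐ[volume] ⋃ n, dyadicSphere n x :=
  iUnion_dyadicSphere hx ▸ (sdiff_null_ae_eq_self (measure_singleton x)).symm

theorem integrableOn_Ici_iff_summable_levelMass (hx : 0 ≤ x)
    (hG : ∀ n, EqOn G (fun _ ↦ g n) (dyadicSphere n x)) :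
    IntegrableOn G (Ici 0) ↔ Summable (levelMass g) := by
  rw [integrableOn_congr_set_ae (Ici_ae_eq_iUnion_dyadicSphere hx)]
  exact integrableOn_iUnion_dyadicSphere_iff Function.injective_id hG

theorem setIntegral_Ici_eq_tsum_levelMass (hx : 0 ≤ x)
    (hG : ∀ n, EqOn G (fun _ ↦ g n) (dyadicSphere n x)) :
    ∫ z in Ici 0, G z = ∑' n, levelMass g n := by
  rw [setIntegral_congr_set (Ici_ae_eq_iUnion_dyadicSphere hx)]
  exact setIntegral_iUnion_dyadicSphere Function.injective_id hG

theorem setIntegral_dyadicBall_eq_ballMass (hx : 0 ≤ x)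
    (hG : ∀ n, EqOn G (fun _ ↦ g n) (dyadicSphere n x)) :
    ∫ z in dyadicBall n x, G z = ballMass g n := by
  rw [← setIntegral_congr_set (sdiff_null_ae_eq_self (measure_singleton x)),
    ← iUnion_dyadicSphere_sub n hx]
  exact setIntegral_iUnion_dyadicSphere (fun a b h ↦ by simpa using h) fun m ↦ hG (n - m)

theorem integrableOn_Ici_sdiff_dyadicBall_iff (hx : 0 ≤ x)
    (hG : ∀ m, n < m → EqOn G (fun _ ↦ g m) (dyadicSphere m x)) :
    IntegrableOn G (Ici 0 \ dyadicBall n x) ↔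
      Summable fun m : ℕ ↦ levelMass g (n + 1 + m) := by
  rw [← iUnion_dyadicSphere_add n hx]
  exact integrableOn_iUnion_dyadicSphere_iff (fun a b h ↦ by simpa using h)
    fun m ↦ hG _ (by omega)

theorem setIntegral_Ici_sdiff_dyadicBall (hx : 0 ≤ x)
    (hG : ∀ m, n < m → EqOn G (fun _ ↦ g m) (dyadicSphere m x)) :
    ∫ z in Ici 0 \ dyadicBall n x, G z = ∑' m : ℕ, levelMass g (n + 1 + m) := by
  rw [← iUnion_dyadicSphere_add n hx]
  exact setIntegral_iUnion_dyadicSphere (fun a b h ↦ by simpa using h) fun m ↦ hG _ (by omega)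

end Radial

section Sequences

variable {k k₁ k₂ : ℤ → ℝ}

theorem ballMass_eq_levelMass_add (hk : Summable (levelMass k)) (n : ℤ) :
    ballMass k n = levelMass k n + ballMass k (n - 1) := by
  have hn : Summable fun m : ℕ ↦ levelMass k (n - m) :=
    hk.comp_injective fun a b h ↦ by simpa using h
  rw [ballMass, hn.tsum_eq_zero_add, ballMass]
  simp only [Nat.cast_zero, sub_zero, Nat.cast_add, Nat.cast_one, sub_sub, add_comm]

theorem alphaOf_eq_levelMass (k : ℤ → ℝ) (j : ℤ) :
    alphaOf k j = 2 * levelMass k (-j) - levelMass k (-j + 1) := by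
  rw [alphaOf, levelMass, levelMass, add_sub_cancel_right, zpow_sub_one₀ two_ne_zero]
  ring

theorem summable_alphaOf (hk : Summable (levelMass k)) : Summable (alphaOf k) := by
  have hneg : Summable fun j : ℤ ↦ levelMass k (-j) := hk.comp_injective neg_injective
  have hneg' : Summable fun j : ℤ ↦ levelMass k (-j + 1) :=
    hk.comp_injective fun a b h ↦ by simpa using h
  exact ((hneg.mul_left 2).sub hneg').congr fun j ↦ (alphaOf_eq_levelMass k j).symm

theorem lambdaOf_eq_ballMass_sub_levelMass (hk : Summable (levelMass k)) (j : ℤ) :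
    LambdaOf k j = ballMass k (-j - 1) - levelMass k (-j) := by
  have hsum (n : ℤ) : Summable fun m : ℕ ↦ levelMass k (n - m) :=
    hk.comp_injective fun a b h ↦ by simpa using h
  calc LambdaOf k j
      = ∑' m : ℕ, (2 * levelMass k (-j - 1 - m) - levelMass k (-j - m)) :=
        tsum_congr fun m ↦ by rw [alphaOf_eq_levelMass]; ring_nf
    _ = 2 * ballMass k (-j - 1) - ballMass k (-j) := by
        rw [((hsum _).mul_left 2).tsum_sub (hsum _), tsum_mul_left, ballMass, ballMass]
    _ = ballMass k (-j - 1) - levelMass k (-j) := by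
        rw [ballMass_eq_levelMass_add hk (-j)]; ring

theorem lambdaOf_eq_alphaOf_add (hk : Summable (levelMass k)) (j : ℤ) :
    LambdaOf k j = alphaOf k (j + 1) + LambdaOf k (j + 1) := by
  have hj : Summable fun m : ℕ ↦ alphaOf k (j + 1 + m) :=
    (summable_alphaOf hk).comp_injective fun a b h ↦ by simpa using h
  rw [LambdaOf, hj.tsum_eq_zero_add, LambdaOf]
  congr 1
  · simp
  · exact tsum_congr fun m ↦ by push_cast; ring_nf

theorem tendsto_lambdaOf (k : ℤ → ℝ) (j : ℤ) :
    Tendsto (fun M : ℕ ↦ LambdaOf k (j + M)) atTop (nhds 0) := by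
  refine (tendsto_sum_nat_add fun m : ℕ ↦ alphaOf k (j + 1 + m)).congr fun M ↦
    tsum_congr fun m ↦ ?_
  push_cast
  ring_nf

theorem summable_levelMass_mul (h₁ : Summable (levelMass k₁)) (h₂ : Summable (levelMass k₂))
    (n : ℤ) : Summable fun m : ℕ ↦ levelMass (k₁ * k₂) (n + 1 + m) := by
  obtain ⟨C, hC⟩ := h₂.tendsto_cofinite_zero.abs.bddAbove_range_of_cofinite
  have hk₂ (m : ℕ) : |k₂ (n + 1 + m)| ≤ C / 2 ^ n := by
    have hle : (2 : ℝ) ^ n ≤ 2 ^ (n + 1 + m - 1) := zpow_le_zpow_right₀ one_le_two (by omega)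
    rw [le_div_iff₀' (by positivity)]
    calc 2 ^ n * |k₂ (n + 1 + m)| ≤ 2 ^ (n + 1 + m - 1) * |k₂ (n + 1 + m)| := by gcongr
      _ = |levelMass k₂ (n + 1 + m)| := by rw [levelMass, abs_mul, abs_zpow, Nat.abs_ofNat]
      _ ≤ C := hC ⟨_, rfl⟩
  have h₁n : Summable fun m : ℕ ↦ levelMass k₁ (n + 1 + m) :=
    h₁.comp_injective fun a b h ↦ by simpa using h
  refine .of_norm_bounded (h₁n.norm.mul_right (C / 2 ^ n)) fun m ↦ ?_
  rw [levelMass, Pi.mul_apply, ← mul_assoc, norm_mul, ← levelMass]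
  gcongr
  exact hk₂ m

/-- The level values of the convolution of two kernels with level values `k₁` and `k₂`. If `x` and
`y` lie in different halves of a dyadic interval of length `2 ^ n`, the three terms are the
contributions to `∫ z, K₁ x z * K₂ z y` of the half containing `x`, of the half containing `y`,
and of the complement of the interval. -/
noncomputable def convLevel (k₁ k₂ : ℤ → ℝ) (n : ℤ) : ℝ :=
  ballMass k₁ (n - 1) * k₂ n + k₁ n * ballMass k₂ (n - 1) +
    ∑' m : ℕ, levelMass (k₁ * k₂) (n + 1 + m)

theorem alphaOf_convLevel (h₁ : Summable (levelMass k₁)) (h₂ : Summable (levelMass k₂)) (j : ℤ) :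
    alphaOf (convLevel k₁ k₂) j =
      alphaOf k₁ j * LambdaOf k₂ j + alphaOf k₂ j * LambdaOf k₁ j +
        alphaOf k₁ j * alphaOf k₂ j := by
  have htail : ∑' m : ℕ, levelMass (k₁ * k₂) (-j + 1 + m) =
      2 ^ (-j) * (k₁ (-j + 1) * k₂ (-j + 1)) +
        ∑' m : ℕ, levelMass (k₁ * k₂) (-j + 1 + 1 + m) := by
    rw [(summable_levelMass_mul h₁ h₂ (-j)).tsum_eq_zero_add]
    congr 1
    · simp [levelMass]
    · exact tsum_congr fun m ↦ by push_cast; ring_nf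
  rw [lambdaOf_eq_ballMass_sub_levelMass h₁, lambdaOf_eq_ballMass_sub_levelMass h₂, alphaOf,
    alphaOf, alphaOf, convLevel, convLevel, htail, add_sub_cancel_right,
    ballMass_eq_levelMass_add h₁ (-j), ballMass_eq_levelMass_add h₂ (-j), levelMass, levelMass,
    zpow_sub_one₀ two_ne_zero]
  ring

theorem lambdaOf_convLevel (h₁ : Summable (levelMass k₁)) (h₂ : Summable (levelMass k₂))
    (h₃ : Summable (levelMass (convLevel k₁ k₂))) (j : ℤ) :
    LambdaOf (convLevel k₁ k₂) j = LambdaOf k₁ j * LambdaOf k₂ j := by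
  let D (i : ℤ) : ℝ := LambdaOf (convLevel k₁ k₂) i - LambdaOf k₁ i * LambdaOf k₂ i
  have hstep (i : ℤ) : D (i + 1) = D i := by
    simp only [D]
    rw [lambdaOf_eq_alphaOf_add h₃ i, lambdaOf_eq_alphaOf_add h₁ i, lambdaOf_eq_alphaOf_add h₂ i,
      alphaOf_convLevel h₁ h₂]
    ring
  have hconst (M : ℕ) : D (j + M) = D j := by
    induction M with
    | zero => simp
    | succ M ih => rw [Nat.cast_succ, ← add_assoc, hstep, ih]
  have hlim : Tendsto (fun M : ℕ ↦ D (j + M)) atTop (nhds 0) := by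
    simpa using (tendsto_lambdaOf (convLevel k₁ k₂) j).sub
      ((tendsto_lambdaOf k₁ j).mul (tendsto_lambdaOf k₂ j))
  simp only [hconst, tendsto_const_nhds_iff] at hlim
  exact sub_eq_zero.1 hlim

end Sequences

/-- `K x y` equals `k n` for all `x, y ≥ 0` at dyadic distance `2 ^ n`. The diagonal values of `K`
are unconstrained. -/
def HasLevelValues (K : ℝ → ℝ → ℝ) (k : ℤ → ℝ) : Prop :=
  ∀ (n : ℤ) (x y : ℝ), 0 ≤ x → 0 ≤ y → dyadicDist x y = (2 : ℝ) ^ n → K x y = k n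

/-- The convolution over `[0, ∞)` of two kernels. It is `0` where the integral does not converge,
which for integrable kernels with level values can happen only on the diagonal. -/
noncomputable def kernelConv (K₁ K₂ : ℝ → ℝ → ℝ) (x y : ℝ) : ℝ :=
  ∫ z in Ici 0, K₁ x z * K₂ z y

namespace HasLevelValues

variable {K : ℝ → ℝ → ℝ} {k : ℤ → ℝ}

theorem eqOn (hK : HasLevelValues K k) {x : ℝ} (hx : 0 ≤ x) (n : ℤ) :
    EqOn (K x) (fun _ ↦ k n) (dyadicSphere n x) :=
  fun z hz ↦ hK n x z hx (dyadicBall_subset_Ici n hx hz.1)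
    (dyadicDist_eq_of_mem_dyadicSphere hx hz)

theorem swap (hK : HasLevelValues K k) : HasLevelValues (fun x y ↦ K y x) k := by
  intro n x y hx hy h
  rw [dyadicDist_eq_two_zpow_iff hx hy, mem_dyadicSphere_comm,
    ← dyadicDist_eq_two_zpow_iff hy hx] at h
  exact hK n y x hy hx h

protected theorem norm (hK : HasLevelValues K k) :
    HasLevelValues (fun x y ↦ ‖K x y‖) fun n ↦ ‖k n‖ :=
  fun n x y hx hy h ↦ congrArg _ (hK n x y hx hy h)

theorem integrableOn_Ici_iff (hK : HasLevelValues K k) {x : ℝ} (hx : 0 ≤ x) :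
    IntegrableOn (K x) (Ici 0) ↔ Summable (levelMass k) :=
  integrableOn_Ici_iff_summable_levelMass hx (hK.eqOn hx)

theorem setIntegral_Ici (hK : HasLevelValues K k) {x : ℝ} (hx : 0 ≤ x) :
    ∫ y in Ici 0, K x y = ∑' n, levelMass k n :=
  setIntegral_Ici_eq_tsum_levelMass hx (hK.eqOn hx)

theorem setIntegral_dyadicBall (hK : HasLevelValues K k) {x : ℝ} (hx : 0 ≤ x) (n : ℤ) :
    ∫ y in dyadicBall n x, K x y = ballMass k n :=
  setIntegral_dyadicBall_eq_ballMass hx (hK.eqOn hx)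

theorem aestronglyMeasurable (hK : HasLevelValues K k) :
    AEStronglyMeasurable (fun p : ℝ × ℝ ↦ K p.1 p.2)
      ((volume.restrict (Ici 0)).prod (volume.restrict (Ici 0))) := by
  have hmem : ∀ᵐ x ∂(volume.restrict (Ici (0 : ℝ))), 0 ≤ x := ae_restrict_mem measurableSet_Ici
  have hcover : ∀ᵐ p ∂((volume.restrict (Ici (0 : ℝ))).prod (volume.restrict (Ici 0))),
      p ∈ ⋃ n, {p : ℝ × ℝ | p.2 ∈ dyadicSphere n p.1} := by
    rw [Measure.ae_prod_mem_iff_ae_ae_mem (.iUnion measurableSet_setOf_mem_dyadicSphere)]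
    filter_upwards [hmem] with x hx
    filter_upwards [hmem, Measure.ae_ne _ x] with y hy hne
    exact mem_iUnion.2 (exists_mem_dyadicSphere hx hy hne)
  rw [← Measure.restrict_eq_self_of_ae_mem hcover, aestronglyMeasurable_iUnion_iff]
  refine fun n ↦ aestronglyMeasurable_const.congr (f := fun _ ↦ k n) ?_
  filter_upwards [ae_restrict_mem (measurableSet_setOf_mem_dyadicSphere n),
    ae_restrict_of_ae (Measure.quasiMeasurePreserving_fst.ae hmem)] with p hp hp₁
  exact (hK.eqOn hp₁ n hp).symm

theorem eq_of_dyadicDist_eq (hK : HasLevelValues K k) {c : ℝ} (hdiag : ∀ z, 0 ≤ z → K z z = c)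
    {x y x' y' : ℝ} (hx : 0 ≤ x) (hy : 0 ≤ y) (hx' : 0 ≤ x') (hy' : 0 ≤ y')
    (h : dyadicDist x y = dyadicDist x' y') : K x y = K x' y' := by
  obtain rfl | hxy := eq_or_ne y x
  · rw [dyadicDist_self, eq_comm, dyadicDist_eq_zero_iff hx' hy'] at h
    rw [h, hdiag y hy, hdiag y' hy']
  · obtain ⟨n, hn⟩ := exists_mem_dyadicSphere hx hy hxy
    have hdist := dyadicDist_eq_of_mem_dyadicSphere hx hn
    rw [hK n x y hx hy hdist, hK n x' y' hx' hy' (h ▸ hdist)]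

end HasLevelValues

section Convolution

variable {K₁ K₂ : ℝ → ℝ → ℝ} {k₁ k₂ : ℤ → ℝ} {n : ℤ} {x y : ℝ}

theorem eqOn_mul_dyadicBall_left (hK₂ : HasLevelValues K₂ k₂) (hx : 0 ≤ x)
    (hxy : y ∈ dyadicSphere n x) :
    EqOn (fun z ↦ K₁ x z * K₂ z y) (fun z ↦ K₁ x z * k₂ n) (dyadicBall (n - 1) x) := by
  intro z hz
  have hzy : y ∈ dyadicSphere n z :=
    dyadicSphere_eq_of_mem_dyadicBall hz (sub_one_lt n) ▸ hxy
  exact congrArg _ (hK₂.eqOn (dyadicBall_subset_Ici _ hx hz) n hzy)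

theorem eqOn_mul_dyadicBall_right (hK₁ : HasLevelValues K₁ k₁) (hx : 0 ≤ x)
    (hxy : y ∈ dyadicSphere n x) :
    EqOn (fun z ↦ K₁ x z * K₂ z y) (fun z ↦ k₁ n * K₂ z y) (dyadicBall (n - 1) y) := by
  intro z hz
  have hzx : x ∈ dyadicSphere n z :=
    dyadicSphere_eq_of_mem_dyadicBall hz (sub_one_lt n) ▸ mem_dyadicSphere_comm.1 hxy
  exact congrArg (· * _) (hK₁.eqOn hx n (mem_dyadicSphere_comm.1 hzx))

theorem eqOn_mul_dyadicSphere (hK₁ : HasLevelValues K₁ k₁) (hK₂ : HasLevelValues K₂ k₂)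
    (hx : 0 ≤ x) (hy : 0 ≤ y) {m : ℤ} (hm : dyadicSphere m y = dyadicSphere m x) :
    EqOn (fun z ↦ K₁ x z * K₂ z y) (fun _ ↦ (k₁ * k₂) m) (dyadicSphere m x) :=
  fun _ hz ↦ congrArg₂ _ (hK₁.eqOn hx m hz) (hK₂.swap.eqOn hy m (hm ▸ hz))

theorem kernelConv_self (hK₁ : HasLevelValues K₁ k₁) (hK₂ : HasLevelValues K₂ k₂) (hx : 0 ≤ x) :
    kernelConv K₁ K₂ x x = ∑' m, levelMass (k₁ * k₂) m :=
  setIntegral_Ici_eq_tsum_levelMass hx fun _ ↦ eqOn_mul_dyadicSphere hK₁ hK₂ hx hx rfl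

theorem Ici_eq_union (hx : 0 ≤ x) (hxy : y ∈ dyadicSphere n x) :
    Ici 0 = dyadicBall (n - 1) x ∪ dyadicBall (n - 1) y ∪ Ici 0 \ dyadicBall n x := by
  rw [← dyadicBall_eq_union hxy, union_sdiff_cancel (dyadicBall_subset_Ici n hx)]

theorem integrableOn_mul (hK₁ : HasLevelValues K₁ k₁) (hK₂ : HasLevelValues K₂ k₂)
    (h₁ : Summable (levelMass k₁)) (h₂ : Summable (levelMass k₂)) (hx : 0 ≤ x) (hy : 0 ≤ y)
    (hxy : y ∈ dyadicSphere n x) : IntegrableOn (fun z ↦ K₁ x z * K₂ z y) (Ici 0) := by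
  have hleft : IntegrableOn (fun z ↦ K₁ x z * K₂ z y) (dyadicBall (n - 1) x) :=
    IntegrableOn.congr_fun
      ((((hK₁.integrableOn_Ici_iff hx).2 h₁).mono_set (dyadicBall_subset_Ici _ hx)).mul_const _)
      (eqOn_mul_dyadicBall_left hK₂ hx hxy).symm (measurableSet_dyadicBall _ x)
  have hright : IntegrableOn (fun z ↦ K₁ x z * K₂ z y) (dyadicBall (n - 1) y) :=
    IntegrableOn.congr_fun
      ((((hK₂.swap.integrableOn_Ici_iff hy).2 h₂).mono_set
        (dyadicBall_subset_Ici _ hy)).const_mul _)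
      (eqOn_mul_dyadicBall_right hK₁ hx hxy).symm (measurableSet_dyadicBall _ y)
  have houter : IntegrableOn (fun z ↦ K₁ x z * K₂ z y) (Ici 0 \ dyadicBall n x) :=
    (integrableOn_Ici_sdiff_dyadicBall_iff hx fun m hm ↦ eqOn_mul_dyadicSphere hK₁ hK₂ hx hy
      (dyadicSphere_eq_of_mem_dyadicBall hxy.1 hm)).2 (summable_levelMass_mul h₁ h₂ n)
  rw [Ici_eq_union hx hxy]
  exact (hleft.union hright).union houter

protected theorem HasLevelValues.kernelConv (hK₁ : HasLevelValues K₁ k₁)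
    (hK₂ : HasLevelValues K₂ k₂) (h₁ : Summable (levelMass k₁)) (h₂ : Summable (levelMass k₂)) :
    HasLevelValues (kernelConv K₁ K₂) (convLevel k₁ k₂) := by
  intro n x y hx hy hdist
  have hxy := (dyadicDist_eq_two_zpow_iff hx hy).1 hdist
  have hint := integrableOn_mul hK₁ hK₂ h₁ h₂ hx hy hxy
  have hleft : ∫ z in dyadicBall (n - 1) x, K₁ x z * K₂ z y = ballMass k₁ (n - 1) * k₂ n := by
    rw [setIntegral_congr_fun (measurableSet_dyadicBall _ x)
      (eqOn_mul_dyadicBall_left hK₂ hx hxy), integral_mul_const, hK₁.setIntegral_dyadicBall hx]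
  have hright : ∫ z in dyadicBall (n - 1) y, K₁ x z * K₂ z y = k₁ n * ballMass k₂ (n - 1) := by
    rw [setIntegral_congr_fun (measurableSet_dyadicBall _ y)
      (eqOn_mul_dyadicBall_right hK₁ hx hxy), integral_const_mul,
      hK₂.swap.setIntegral_dyadicBall hy]
  have houter : ∫ z in Ici 0 \ dyadicBall n x, K₁ x z * K₂ z y =
      ∑' m : ℕ, levelMass (k₁ * k₂) (n + 1 + m) :=
    setIntegral_Ici_sdiff_dyadicBall hx fun m hm ↦ eqOn_mul_dyadicSphere hK₁ hK₂ hx hy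
      (dyadicSphere_eq_of_mem_dyadicBall hxy.1 hm)
  have hinner : ∫ z in dyadicBall n x, K₁ x z * K₂ z y =
      ballMass k₁ (n - 1) * k₂ n + k₁ n * ballMass k₂ (n - 1) := by
    rw [dyadicBall_eq_union hxy, setIntegral_union (disjoint_dyadicBall_sub_one hxy)
      (measurableSet_dyadicBall _ y) (hint.mono_set (dyadicBall_subset_Ici _ hx))
      (hint.mono_set (dyadicBall_subset_Ici _ hy)), hleft, hright]
  calc ∫ z in Ici 0, K₁ x z * K₂ z y
      = (∫ z in dyadicBall n x, K₁ x z * K₂ z y) +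
          ∫ z in Ici 0 \ dyadicBall n x, K₁ x z * K₂ z y := by
        rw [← integral_inter_add_sdiff (measurableSet_dyadicBall n x) hint,
          inter_eq_right.2 (dyadicBall_subset_Ici n hx)]
    _ = convLevel k₁ k₂ n := by rw [hinner, houter, convLevel]

theorem kernelConv_eq_of_dyadicDist_eq (hK₁ : HasLevelValues K₁ k₁) (hK₂ : HasLevelValues K₂ k₂)
    (h₁ : Summable (levelMass k₁)) (h₂ : Summable (levelMass k₂)) {x' y' : ℝ} (hx : 0 ≤ x)
    (hy : 0 ≤ y) (hx' : 0 ≤ x') (hy' : 0 ≤ y') (h : dyadicDist x y = dyadicDist x' y') :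
    kernelConv K₁ K₂ x y = kernelConv K₁ K₂ x' y' :=
  (hK₁.kernelConv hK₂ h₁ h₂).eq_of_dyadicDist_eq
    (fun _ hz ↦ kernelConv_self hK₁ hK₂ hz) hx hy hx' hy' h

theorem integrable_mul_prod (hK₁ : HasLevelValues K₁ k₁) (hK₂ : HasLevelValues K₂ k₂)
    (h₁ : Summable (levelMass k₁)) (h₂ : Summable (levelMass k₂)) (hx : 0 ≤ x) :
    Integrable (fun p : ℝ × ℝ ↦ K₁ x p.1 * K₂ p.1 p.2)
      ((volume.restrict (Ici 0)).prod (volume.restrict (Ici 0))) := by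
  have hK₁x : IntegrableOn (K₁ x) (Ici 0) := (hK₁.integrableOn_Ici_iff hx).2 h₁
  have hmeas : AEStronglyMeasurable (fun p : ℝ × ℝ ↦ K₁ x p.1 * K₂ p.1 p.2)
      ((volume.restrict (Ici 0)).prod (volume.restrict (Ici 0))) :=
    hK₁x.aestronglyMeasurable.comp_fst.mul hK₂.aestronglyMeasurable
  have hnorm {z : ℝ} (hz : 0 ≤ z) :
      ∫ y in Ici 0, ‖K₁ x z * K₂ z y‖ = ‖K₁ x z‖ * ∑' n, levelMass (fun n ↦ ‖k₂ n‖) n := by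
    simp only [norm_mul]
    rw [integral_const_mul, hK₂.norm.setIntegral_Ici hz]
  refine (integrable_prod_iff hmeas).2
    ⟨?_, (hK₁x.norm.mul_const (∑' n, levelMass (fun n ↦ ‖k₂ n‖) n)).congr ?_⟩
  · filter_upwards [ae_restrict_mem measurableSet_Ici] with z hz
    exact ((hK₂.integrableOn_Ici_iff hz).2 h₂).const_mul _
  · filter_upwards [ae_restrict_mem measurableSet_Ici] with z hz
    exact (hnorm hz).symm

theorem integrableOn_kernelConv (hK₁ : HasLevelValues K₁ k₁) (hK₂ : HasLevelValues K₂ k₂)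
    (h₁ : Summable (levelMass k₁)) (h₂ : Summable (levelMass k₂)) (hx : 0 ≤ x) :
    IntegrableOn (kernelConv K₁ K₂ x) (Ici 0) :=
  (integrable_mul_prod hK₁ hK₂ h₁ h₂ hx).integral_prod_right

theorem setIntegral_kernelConv (hK₁ : HasLevelValues K₁ k₁) (hK₂ : HasLevelValues K₂ k₂)
    (h₁ : Summable (levelMass k₁)) (h₂ : Summable (levelMass k₂)) (hx : 0 ≤ x) :
    ∫ y in Ici 0, kernelConv K₁ K₂ x y = (∑' n, levelMass k₁ n) * ∑' n, levelMass k₂ n := by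
  calc ∫ y in Ici 0, kernelConv K₁ K₂ x y
      = ∫ z in Ici 0, ∫ y in Ici 0, K₁ x z * K₂ z y :=
        (integral_integral_swap (integrable_mul_prod hK₁ hK₂ h₁ h₂ hx)).symm
    _ = ∫ z in Ici 0, K₁ x z * ∑' n, levelMass k₂ n :=
        setIntegral_congr_fun measurableSet_Ici fun z hz ↦ by
          rw [integral_const_mul, hK₂.setIntegral_Ici hz]
    _ = (∑' n, levelMass k₁ n) * ∑' n, levelMass k₂ n := by
        rw [integral_mul_const, hK₁.setIntegral_Ici hx]

end Convolution

theorem kernel_convolution_general (K₁ K₂ : ℝ → ℝ → ℝ) (k₁ k₂ : ℤ → ℝ)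
    (hK₁ : HasLevelValues K₁ k₁) (x₁ : ℝ) (hx₁ : 0 ≤ x₁) (hint₁ : IntegrableOn (K₁ x₁) (Ici 0))
    (hK₂ : HasLevelValues K₂ k₂) (x₂ : ℝ) (hx₂ : 0 ≤ x₂) (hint₂ : IntegrableOn (K₂ x₂) (Ici 0)) :
    (∀ x y : ℝ, 0 ≤ x → 0 ≤ y → x ≠ y → IntegrableOn (fun z ↦ K₁ x z * K₂ z y) (Ici 0)) ∧
    (∀ x y x' y' : ℝ, 0 ≤ x → 0 ≤ y → 0 ≤ x' → 0 ≤ y' →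
      dyadicDist x y = dyadicDist x' y' → kernelConv K₁ K₂ x y = kernelConv K₁ K₂ x' y') ∧
    (∀ x : ℝ, 0 ≤ x → IntegrableOn (kernelConv K₁ K₂ x) (Ici 0) ∧
      ∫ y in Ici 0, kernelConv K₁ K₂ x y =
        (∫ y in Ici 0, K₁ x₁ y) * ∫ y in Ici 0, K₂ x₂ y) ∧
    ∃ k₃ : ℤ → ℝ, HasLevelValues (kernelConv K₁ K₂) k₃ ∧
      (∀ j : ℤ, alphaOf k₃ j =
        alphaOf k₁ j * LambdaOf k₂ j + alphaOf k₂ j * LambdaOf k₁ j +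
          alphaOf k₁ j * alphaOf k₂ j) ∧
      ∀ j : ℤ, LambdaOf k₃ j = LambdaOf k₁ j * LambdaOf k₂ j := by
  have h₁ : Summable (levelMass k₁) := (hK₁.integrableOn_Ici_iff hx₁).1 hint₁
  have h₂ : Summable (levelMass k₂) := (hK₂.integrableOn_Ici_iff hx₂).1 hint₂
  have hconv : HasLevelValues (kernelConv K₁ K₂) (convLevel k₁ k₂) := hK₁.kernelConv hK₂ h₁ h₂
  have h₃ : Summable (levelMass (convLevel k₁ k₂)) :=
    (hconv.integrableOn_Ici_iff le_rfl).1 (integrableOn_kernelConv hK₁ hK₂ h₁ h₂ le_rfl)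
  refine ⟨fun x y hx hy hxy ↦ ?_, fun x y x' y' hx hy hx' hy' ↦
    kernelConv_eq_of_dyadicDist_eq hK₁ hK₂ h₁ h₂ hx hy hx' hy', fun x hx ↦
    ⟨integrableOn_kernelConv hK₁ hK₂ h₁ h₂ hx, ?_⟩, convLevel k₁ k₂, hconv,
    alphaOf_convLevel h₁ h₂, lambdaOf_convLevel h₁ h₂ h₃⟩
  · obtain ⟨n, hn⟩ := exists_mem_dyadicSphere hx hy hxy.symm
    exact integrableOn_mul hK₁ hK₂ h₁ h₂ hx hy hn
  · rw [setIntegral_kernelConv hK₁ hK₂ h₁ h₂ hx, hK₁.setIntegral_Ici hx₁, hK₂.setIntegral_Ici hx₂]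

/-- Lemma 9 (a), (c): the convolution `K₃(x,y) = ∫ K₁(x,z) K₂(z,y) dz` of two kernels in `𝒦`
is well defined, belongs to `𝒦`, and its associated sequences satisfy
`α³_j = α¹_j Λ²_j + α²_j Λ¹_j + α¹_j α²_j` and `Λ³_j = Λ¹_j Λ²_j`. -/
theorem kernel_convolution (K₁ K₂ K₃ : ℝ → ℝ → ℝ) (k₁ k₂ : ℤ → ℝ)
    (hK₁0 : ∀ x y : ℝ, 0 ≤ x → 0 ≤ y → 0 ≤ K₁ x y)
    (hK₁dist : ∀ x y x' y' : ℝ, 0 ≤ x → 0 ≤ y → 0 ≤ x' → 0 ≤ y' →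
      dyadicDist x y = dyadicDist x' y' → K₁ x y = K₁ x' y')
    (x₁ : ℝ) (hx₁ : 0 ≤ x₁) (hK₁norm : (∫ y in Set.Ici (0:ℝ), K₁ x₁ y) = 1)
    (hk₁ : ∀ (j : ℤ) (x y : ℝ), 0 ≤ x → 0 ≤ y → dyadicDist x y = (2:ℝ) ^ j → K₁ x y = k₁ j)
    (hK₂0 : ∀ x y : ℝ, 0 ≤ x → 0 ≤ y → 0 ≤ K₂ x y)
    (hK₂dist : ∀ x y x' y' : ℝ, 0 ≤ x → 0 ≤ y → 0 ≤ x' → 0 ≤ y' →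
      dyadicDist x y = dyadicDist x' y' → K₂ x y = K₂ x' y')
    (x₂ : ℝ) (hx₂ : 0 ≤ x₂) (hK₂norm : (∫ y in Set.Ici (0:ℝ), K₂ x₂ y) = 1)
    (hk₂ : ∀ (j : ℤ) (x y : ℝ), 0 ≤ x → 0 ≤ y → dyadicDist x y = (2:ℝ) ^ j → K₂ x y = k₂ j)
    (hK₃ : ∀ x y : ℝ, K₃ x y = ∫ z in Set.Ici (0:ℝ), K₁ x z * K₂ z y) :
    (∀ x y : ℝ, 0 ≤ x → 0 ≤ y → x ≠ y →
      MeasureTheory.IntegrableOn (fun z => K₁ x z * K₂ z y) (Set.Ici (0:ℝ))) ∧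
    (∀ x y : ℝ, 0 ≤ x → 0 ≤ y → 0 ≤ K₃ x y) ∧
    (∀ x y x' y' : ℝ, 0 ≤ x → 0 ≤ y → 0 ≤ x' → 0 ≤ y' →
      dyadicDist x y = dyadicDist x' y' → K₃ x y = K₃ x' y') ∧
    (∀ x : ℝ, 0 ≤ x → (∫ y in Set.Ici (0:ℝ), K₃ x y) = 1) ∧
    (∃ k₃ : ℤ → ℝ,
      (∀ (j : ℤ) (x y : ℝ), 0 ≤ x → 0 ≤ y → dyadicDist x y = (2:ℝ) ^ j → K₃ x y = k₃ j) ∧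
      (∀ j : ℤ, alphaOf k₃ j =
        alphaOf k₁ j * LambdaOf k₂ j + alphaOf k₂ j * LambdaOf k₁ j +
          alphaOf k₁ j * alphaOf k₂ j) ∧
      (∀ j : ℤ, LambdaOf k₃ j = LambdaOf k₁ j * LambdaOf k₂ j)) := by
  obtain rfl : K₃ = kernelConv K₁ K₂ := funext₂ hK₃
  obtain ⟨hwell, hdist, hmass, hseq⟩ := kernel_convolution_general K₁ K₂ k₁ k₂
    hk₁ x₁ hx₁ (integrable_of_integral_eq_one hK₁norm)
    hk₂ x₂ hx₂ (integrable_of_integral_eq_one hK₂norm)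
  refine ⟨hwell, fun x y hx hy ↦ ?_, hdist, fun x hx ↦ ?_, hseq⟩
  · exact setIntegral_nonneg measurableSet_Ici fun z hz ↦
      mul_nonneg (hK₁0 x z hx hz) (hK₂0 z y hz hy)
  · rw [(hmass x hx).2, hK₁norm, hK₂norm, one_mul]
end
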